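/- Let H be an unweighted MaxCut instance with m edges whose r-round Sherali-Adams solution z = (z_e)_{e∈E_H} (with r ≥ 2) has value Σ_{e∈E_H} z_e = c·m, and let {D_T} be the consistent local distributions on the powered instance G_ℓ constructed from it by the recursive symmetrized sampling process. Define y_{uv} := D_{{u,v}}({{u},{v}}), the probability that exactly one of u,v is chosen. Then: (i) y_e = 2^{−ℓ} for every capacity edge e of G_ℓ and the total capacity of G_ℓ is 2^ℓ, so Σ_{e capacity edge} cap_e·y_e = 1; (ii) Σ_{e demand edge} dem_e·y_e = ℓ·c; hence the sparsity of the fractional solution y, the ratio of its capacity value to its demand value, equals 1/(ℓc). -/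

import Mathlib

attribute [local instance] Classical.propDecidable

open Finset

namespace Stmt19

/-- A Sparsest Cut instance: a finite vertex set `V` with two designated vertices
`s` and `t`, a finite set `E` of (oriented) supply edges with capacities `cap`, and a
finite set `Dm` of demand pairs with demands `dem`. -/
structure SCI where
  V : Type
  fV : Fintype V
  dV : DecidableEq V
  s : V
  t : V
  E : Finset (V × V)
  cap : V × V → ℝ
  Dm : Finset (V × V)
  dem : V × V → ℝ

attribute [instance] SCI.fV SCI.dV

namespace SCI

/-- Capacity of a cut `(S, V∖S)`: total capacity of supply edges crossing it. -/
noncomputable def cutCap (I : SCI) (S : Finset I.V) : ℝ :=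
  ∑ e ∈ I.E.filter (fun e => ¬((e.1 ∈ S) ↔ (e.2 ∈ S))), I.cap e

/-- Demand separated by a cut `(S, V∖S)`: total demand of demand pairs crossing it. -/
noncomputable def cutDem (I : SCI) (S : Finset I.V) : ℝ :=
  ∑ q ∈ I.Dm.filter (fun q => ¬((q.1 ∈ S) ↔ (q.2 ∈ S))), I.dem q

end SCI

/-- Vertex set obtained by replacing each capacity edge `e = (u,v)` of `G1` by a copy
of `Gp`, identifying the `s` of the copy with `u` and its `t` with `v`:  the vertices
of `G1` together with, for every edge `e` of `G1`, a copy of the interior (non-`s`,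
non-`t`) vertices of `Gp`. -/
abbrev glueV (G1 Gp : SCI) : Type :=
  G1.V ⊕ ({e // e ∈ G1.E} × {v : Gp.V // v ≠ Gp.s ∧ v ≠ Gp.t})

/-- Placement of a vertex `v` of the copy of `Gp` corresponding to edge `e` of `G1`:
the copy's `s` is identified with `e.1`, its `t` with `e.2`, and interior vertices
keep their identity inside the copy. -/
noncomputable def embed (G1 Gp : SCI) (e : {e // e ∈ G1.E}) (v : Gp.V) : glueV G1 Gp :=
  if h1 : v = Gp.s then Sum.inl e.1.1
  else if h2 : v = Gp.t then Sum.inl e.1.2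
  else Sum.inr (e, ⟨v, h1, h2⟩)

/-- One step of the powering operation: replace every capacity edge `e = (u,v)` of
`G1` by a copy of `Gp` (scaled by `cap e`, with its `s` identified with `u` and its
`t` with `v`), and retain the demand edges of `G1` as the new top-level demands. -/
noncomputable def glue (G1 Gp : SCI) : SCI where
  V := glueV G1 Gp
  fV := inferInstance
  dV := inferInstance
  s := Sum.inl G1.s
  t := Sum.inl G1.t
  E := G1.E.attach.biUnion fun e =>
        Gp.E.image fun f => (embed G1 Gp e f.1, embed G1 Gp e f.2)
  cap := fun p => ∑ e ∈ G1.E.attach, ∑ f ∈ Gp.E,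
        if (embed G1 Gp e f.1, embed G1 Gp e f.2) = p then G1.cap e.1 * Gp.cap f else 0
  Dm := (G1.Dm.image fun q => ((Sum.inl q.1 : glueV G1 Gp), (Sum.inl q.2 : glueV G1 Gp))) ∪
        (G1.E.attach.biUnion fun e =>
          Gp.Dm.image fun f => (embed G1 Gp e f.1, embed G1 Gp e f.2))
  dem := fun p =>
      (∑ q ∈ G1.Dm,
        if ((Sum.inl q.1 : glueV G1 Gp), (Sum.inl q.2 : glueV G1 Gp)) = p
        then G1.dem q else 0) +
      ∑ e ∈ G1.E.attach, ∑ f ∈ Gp.Dm,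
        if (embed G1 Gp e f.1, embed G1 Gp e f.2) = p then G1.cap e.1 * Gp.dem f else 0

/-- The powered instance: `Gpow G1 k` is the instance `G_{k+1}` of the paper, i.e.
`Gpow G1 0 = G₁` and `Gpow G1 k = G_{k+1}` is obtained from `G₁` by replacing each
capacity edge with a copy of `G_k`. -/
noncomputable def Gpow (G1 : SCI) : ℕ → SCI
  | 0 => G1
  | k + 1 => glue G1 (Gpow G1 k)

/-- The base instance `G₁` built from a MaxCut instance `H` on `[n]` with `m` edges:
vertex set `{s,t} ∪ [n]` (`s = inr false`, `t = inr true`), supply edges `(s,i)` and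
`(i,t)` of capacity `deg_H(i)/(2m)` for each `i`, and demand `1/m` between `i` and `j`
for each edge `{i,j}` of `H` (each such unordered pair listed once). -/
noncomputable def buildG1 (n : ℕ) (H : SimpleGraph (Fin n)) [DecidableRel H.Adj] : SCI where
  V := Fin n ⊕ Bool
  fV := inferInstance
  dV := inferInstance
  s := Sum.inr false
  t := Sum.inr true
  E := (Finset.univ.image fun i : Fin n =>
          ((Sum.inr false : Fin n ⊕ Bool), (Sum.inl i : Fin n ⊕ Bool))) ∪
       (Finset.univ.image fun i : Fin n =>
          ((Sum.inl i : Fin n ⊕ Bool), (Sum.inr true : Fin n ⊕ Bool)))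
  cap := fun p =>
    match p with
    | (Sum.inr false, Sum.inl i) => (H.degree i : ℝ) / (2 * H.edgeFinset.card)
    | (Sum.inl i, Sum.inr true) => (H.degree i : ℝ) / (2 * H.edgeFinset.card)
    | _ => 0
  Dm := (Finset.univ.filter fun p : Fin n × Fin n => H.Adj p.1 p.2 ∧ p.1 < p.2).image
          (fun p => ((Sum.inl p.1 : Fin n ⊕ Bool), (Sum.inl p.2 : Fin n ⊕ Bool)))
  dem := fun p =>
    match p with
    | (Sum.inl i, Sum.inl j) => if H.Adj i j then 1 / (H.edgeFinset.card : ℝ) else 0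
    | _ => 0


/-- The law of `X ∩ T`, where `X` is the `s`-side produced by the symmetrized sampling
process on the base instance `G₁`:  `s` is always placed in `X` and `t` never is; a
subset of the base vertices `[n]` appearing in `T` is drawn from the local
Sherali-Adams distribution `F` and, with probability `1/2`, complemented. -/
noncomputable def baseDist (n : ℕ) (F : Finset (Fin n) → Finset (Fin n) → ℝ)
    (T A : Finset (Fin n ⊕ Bool)) : ℝ :=
  if A ⊆ T ∧ (Sum.inr false ∈ T → Sum.inr false ∈ A) ∧ Sum.inr true ∉ A then
    (1 / 2) *
      (F (Finset.univ.filter fun i => Sum.inl i ∈ T)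
         (Finset.univ.filter fun i => Sum.inl i ∈ A) +
       F (Finset.univ.filter fun i => Sum.inl i ∈ T)
         ((Finset.univ.filter fun i => Sum.inl i ∈ T) \
          (Finset.univ.filter fun i => Sum.inl i ∈ A)))
  else 0

/-- One level of the recursive symmetrized sampling process on the powered instance
`glue G₁ Gp` (where `G₁ = buildG1 n H`), expressed as the law of `X ∩ T` where `X` is
the sampled `s`-side:  first the base vertices of the extension `T₁` of `T` (the
endpoints of every copy of `Gp` meeting `T`, together with `s`, `t` and the base part
of `T`) are assigned by the symmetrized base rule; then every copy of `Gp` whose two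
endpoints lie on the same side is placed entirely on that side, while each copy whose
endpoints are separated is cut by recursing inside the copy (via `Dprev`, with the
copy's `s` on the appropriate side). -/
noncomputable def Dstep (n : ℕ) (H : SimpleGraph (Fin n)) [DecidableRel H.Adj]
    (F : Finset (Fin n) → Finset (Fin n) → ℝ) (Gp : SCI)
    (Dprev : Finset Gp.V → Finset Gp.V → ℝ)
    (T A : Finset (glueV (buildG1 n H) Gp)) : ℝ :=
  let G1 := buildG1 n H
  let Tb : Finset G1.V := Finset.univ.filter fun b => (Sum.inl b : glueV G1 Gp) ∈ T
  let Ab : Finset G1.V := Finset.univ.filter fun b => (Sum.inl b : glueV G1 Gp) ∈ A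
  let Tc : {e // e ∈ G1.E} → Finset Gp.V := fun e =>
    Finset.univ.filter fun v =>
      ∃ h : v ≠ Gp.s ∧ v ≠ Gp.t, (Sum.inr (e, ⟨v, h⟩) : glueV G1 Gp) ∈ T
  let Ac : {e // e ∈ G1.E} → Finset Gp.V := fun e =>
    Finset.univ.filter fun v =>
      ∃ h : v ≠ Gp.s ∧ v ≠ Gp.t, (Sum.inr (e, ⟨v, h⟩) : glueV G1 Gp) ∈ A
  let T1 : Finset G1.V :=
    insert G1.s (insert G1.t
      (Tb ∪ G1.E.attach.biUnion fun e => if Tc e ≠ ∅ then {e.1.1, e.1.2} else ∅))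
  if A ⊆ T then
    ∑ β ∈ T1.powerset,
      baseDist n F T1 β * (if β ∩ Tb = Ab then 1 else 0) *
      ∏ e ∈ G1.E.attach,
        (if e.1.1 ∈ β ∧ e.1.2 ∈ β then (if Ac e = Tc e then (1 : ℝ) else 0)
         else if e.1.1 ∉ β ∧ e.1.2 ∉ β then (if Ac e = ∅ then (1 : ℝ) else 0)
         else if e.1.1 ∈ β then
           Dprev (insert Gp.s (insert Gp.t (Tc e))) (insert Gp.s (Ac e))
         else
           Dprev (insert Gp.s (insert Gp.t (Tc e))) (insert Gp.s (Tc e \ Ac e)))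
  else 0

/-- The family of local distributions `D_T` on the powered instance
`G_{k+1} = Gpow (buildG1 n H) k`, defined by the recursive symmetrized sampling
process: `D_T(A)` is the probability that the sampled `s`-side `X` satisfies
`X ∩ T = A`. -/
noncomputable def Dfam (n : ℕ) (H : SimpleGraph (Fin n)) [DecidableRel H.Adj]
    (F : Finset (Fin n) → Finset (Fin n) → ℝ) :
    (k : ℕ) → Finset (Gpow (buildG1 n H) k).V → Finset (Gpow (buildG1 n H) k).V → ℝ
  | 0 => baseDist n F
  | k + 1 => Dstep n H F (Gpow (buildG1 n H) k) (Dfam n H F k)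

section helpers

/-- the consistency properties with respect to `s,t` needed for the recursion -/
structure Good (Gp : SCI) (D : Finset Gp.V → Finset Gp.V → ℝ) : Prop where
  ne : Gp.s ≠ Gp.t
  supp : ∀ T A, D T A ≠ 0 → A ⊆ T ∧ (Gp.s ∈ T → Gp.s ∈ A) ∧ Gp.t ∉ A
  st : ∀ T A, A ⊆ T → (Gp.s ∈ T → Gp.s ∈ A) → Gp.t ∉ A →
    D (insert Gp.s (insert Gp.t T)) (insert Gp.s A) = D T A
  one : D (insert Gp.s (insert Gp.t ∅)) (insert Gp.s ∅) = 1

/-- The base data: supply edges go from `s` to an inner vertex or from an inner vertex to `t`,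
and an inner vertex is on either side with probability one half. -/
structure BGood (G1 : SCI) (bd : Finset G1.V → Finset G1.V → ℝ) : Prop extends Good G1 bd where
  edge : ∀ e ∈ G1.E, ∃ i, i ≠ G1.s ∧ i ≠ G1.t ∧
    ((e.1 = G1.s ∧ e.2 = i) ∨ (e.1 = i ∧ e.2 = G1.t))
  half : ∀ i, i ≠ G1.s → i ≠ G1.t → bd {i} ∅ = 1 / 2 ∧ bd {i} {i} = 1 / 2

variable {G1 Gp : SCI} {bd : Finset G1.V → Finset G1.V → ℝ}


noncomputable def tb (T : Finset (glueV G1 Gp)) : Finset G1.V :=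
  Finset.univ.filter fun b => (Sum.inl b : glueV G1 Gp) ∈ T

noncomputable def tc (T : Finset (glueV G1 Gp)) (e : {e // e ∈ G1.E}) : Finset Gp.V :=
  Finset.univ.filter fun v =>
      ∃ h : v ≠ Gp.s ∧ v ≠ Gp.t, (Sum.inr (e, ⟨v, h⟩) : glueV G1 Gp) ∈ T

noncomputable def t1 (T : Finset (glueV G1 Gp)) : Finset G1.V :=
  insert G1.s (insert G1.t
      (tb T ∪ G1.E.attach.biUnion fun e => if tc T e ≠ ∅ then {e.1.1, e.1.2} else ∅))

noncomputable def fac (Dprev : Finset Gp.V → Finset Gp.V → ℝ) (T A : Finset (glueV G1 Gp))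
    (β : Finset G1.V) (e : {e // e ∈ G1.E}) : ℝ :=
  (if e.1.1 ∈ β ∧ e.1.2 ∈ β then (if tc A e = tc T e then (1 : ℝ) else 0)
         else if e.1.1 ∉ β ∧ e.1.2 ∉ β then (if tc A e = ∅ then (1 : ℝ) else 0)
         else if e.1.1 ∈ β then
           Dprev (insert Gp.s (insert Gp.t (tc T e))) (insert Gp.s (tc A e))
         else
           Dprev (insert Gp.s (insert Gp.t (tc T e))) (insert Gp.s (tc T e \ tc A e)))

noncomputable def gstep (bd : Finset G1.V → Finset G1.V → ℝ)
    (D : Finset Gp.V → Finset Gp.V → ℝ) (T A : Finset (glueV G1 Gp)) : ℝ :=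
  if A ⊆ T then
      ∑ β ∈ (t1 T).powerset, bd (t1 T) β * (if β ∩ tb T = tb A then 1 else 0) *
        ∏ e ∈ G1.E.attach, fac D T A β e else 0

lemma mem_tb {T : Finset (glueV G1 Gp)} {b : G1.V} :
    b ∈ tb T ↔ (Sum.inl b : glueV G1 Gp) ∈ T := by simp [tb]

lemma mem_tc {T : Finset (glueV G1 Gp)} {e : {e // e ∈ G1.E}} {v : Gp.V} :
    v ∈ tc T e ↔ ∃ h : v ≠ Gp.s ∧ v ≠ Gp.t, (Sum.inr (e, ⟨v, h⟩) : glueV G1 Gp) ∈ T := by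
  simp [tc]

lemma mem_t1 {T : Finset (glueV G1 Gp)} {b : G1.V} :
    b ∈ t1 T ↔ b = G1.s ∨ b = G1.t ∨ b ∈ tb T ∨
      ∃ e : {e // e ∈ G1.E}, (tc T e).Nonempty ∧ (b = e.1.1 ∨ b = e.1.2) := by
  simp only [t1, Finset.mem_insert, Finset.mem_union, Finset.mem_biUnion]
  have : ∀ e : {e // e ∈ G1.E}, (b ∈ (if tc T e ≠ ∅ then ({e.1.1, e.1.2} : Finset G1.V) else ∅)) ↔
      ((tc T e).Nonempty ∧ (b = e.1.1 ∨ b = e.1.2)) := by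
    intro e
    by_cases h : tc T e = ∅
    · simp [h]
    · simp [h, Finset.nonempty_iff_ne_empty]
  simp only [this, Finset.mem_attach, true_and]

lemma fac_empty {D : Finset Gp.V → Finset Gp.V → ℝ} (hD : Good Gp D)
    {T A : Finset (glueV G1 Gp)} (β : Finset G1.V) {e : {e // e ∈ G1.E}}
    (hT : tc T e = ∅) (hA : tc A e = ∅) : fac D T A β e = 1 := by
  have := hD.one
  unfold fac
  rw [hT, hA]
  simp only [if_true, Finset.sdiff_self, this]
  split_ifs <;> rfl

lemma gstep_supp (hB : Good G1 bd) {D : Finset Gp.V → Finset Gp.V → ℝ}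
    {T A : Finset (glueV G1 Gp)} (h : gstep bd D T A ≠ 0) :
    A ⊆ T ∧ ((Sum.inl G1.s : glueV G1 Gp) ∈ T →
      (Sum.inl G1.s : glueV G1 Gp) ∈ A) ∧
      (Sum.inl G1.t : glueV G1 Gp) ∉ A := by
  rw [gstep] at h
  by_cases hAT : A ⊆ T
  swap
  · simp [hAT] at h
  rw [if_pos hAT] at h
  obtain ⟨β, hβ, hne⟩ := Finset.exists_ne_zero_of_sum_ne_zero h
  have h1 : bd (t1 T) β ≠ 0 := fun h0 => hne (by rw [h0]; ring)
  have h2 : β ∩ tb T = tb A := by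
    by_contra h0
    exact hne (by rw [if_neg h0]; ring)
  obtain ⟨_, hs, ht⟩ := hB.supp _ _ h1
  have hs' : G1.s ∈ β := hs (mem_t1.2 (Or.inl rfl))
  have ht' : G1.t ∉ β := ht
  refine ⟨hAT, fun h => ?_, fun h => ?_⟩
  · rw [← mem_tb] at h ⊢
    rw [← h2]
    exact Finset.mem_inter.2 ⟨hs', h⟩
  · rw [← mem_tb, ← h2] at h
    exact ht' (Finset.mem_inter.1 h).1

lemma gstep_st (hB : Good G1 bd) {D : Finset Gp.V → Finset Gp.V → ℝ}
    {T A : Finset (glueV G1 Gp)} (hAT : A ⊆ T)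
    (hs : (Sum.inl G1.s : glueV G1 Gp) ∈ T →
      (Sum.inl G1.s : glueV G1 Gp) ∈ A)
    (ht : (Sum.inl G1.t : glueV G1 Gp) ∉ A) 
    {T' A' : Finset (glueV G1 Gp)}
    (hT' : ∀ x, x ∈ T' ↔ x = Sum.inl G1.s ∨ x = Sum.inl G1.t ∨ x ∈ T)
    (hA' : ∀ x, x ∈ A' ↔ x = Sum.inl G1.s ∨ x ∈ A) :
    gstep bd D T' A' = gstep bd D T A := by
  have hst : G1.s ≠ G1.t := hB.ne
  have htcT : tc T' = tc T := by
    ext e v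
    simp [mem_tc, hT']
  have htcA : tc A' = tc A := by
    ext e v
    simp [mem_tc, hA']
  have ht1 : t1 T' = t1 T := by
    ext b
    simp only [mem_t1, mem_tb, hT', htcT, Sum.inl.injEq]
    grind
  have hAT' : A' ⊆ T' := by
    intro x hx
    have := @hAT x
    rw [hT']; rw [hA'] at hx
    tauto
  rw [gstep, gstep, if_pos hAT, if_pos hAT', ht1]
  refine Finset.sum_congr rfl fun β hβ => ?_
  by_cases h1 : bd (t1 T) β = 0
  · rw [h1]; ring
  obtain ⟨_, hsβ, htβ⟩ := hB.supp _ _ h1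
  have hs' : G1.s ∈ β := hsβ (mem_t1.2 (Or.inl rfl))
  have ht' : G1.t ∉ β := htβ
  have hfac : ∀ e, fac D T' A' β e = fac D T A β e := by
    intro e; simp only [fac, htcT, htcA]
  have hiff : (β ∩ tb T' = tb A') ↔ (β ∩ tb T = tb A) := by
    simp only [Finset.ext_iff, Finset.mem_inter, mem_tb, hT', hA', Sum.inl.injEq]
    refine forall_congr' fun b => ?_
    by_cases hb : b = G1.s
    · subst hb; simp only [hs', true_and, true_or, true_iff]; grind
    · by_cases hb2 : b = G1.t
      · subst hb2; simp [ht', ht, hst.symm]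
      · simp [hb, hb2]
  simp only [hfac, hiff]

lemma gstep_top (hB : Good G1 bd) {D : Finset Gp.V → Finset Gp.V → ℝ} (hD : Good Gp D)
    {T A : Finset (glueV G1 Gp)} {B C : Finset G1.V}
    (hT : ∀ x, x ∈ T ↔ ∃ b ∈ B, x = Sum.inl b) (hA : ∀ x, x ∈ A ↔ ∃ b ∈ C, x = Sum.inl b)
    (hCB : C ⊆ B) :
    gstep bd D T A = bd B C := by
  have hAT : A ⊆ T := by
    intro x hx
    obtain ⟨b, hb, rfl⟩ := (hA _).1 hx
    exact (hT _).2 ⟨b, hCB hb, rfl⟩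
  have htcT : ∀ e, tc T e = ∅ := by
    intro e; ext v; simp [mem_tc, hT]
  have htcA : ∀ e, tc A e = ∅ := by
    intro e; ext v; simp [mem_tc, hA]
  have htbT : ∀ b : G1.V, b ∈ tb T ↔ b ∈ B := by
    intro b; rw [mem_tb, hT]; exact ⟨fun ⟨b', h, h'⟩ => Sum.inl.inj h' ▸ h, fun h => ⟨b, h, rfl⟩⟩
  have htbA : ∀ b : G1.V, b ∈ tb A ↔ b ∈ C := by
    intro b; rw [mem_tb, hA]; exact ⟨fun ⟨b', h, h'⟩ => Sum.inl.inj h' ▸ h, fun h => ⟨b, h, rfl⟩⟩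
  by_cases hgood : (G1.s ∈ B → G1.s ∈ C) ∧ G1.t ∉ C
  swap
  · have h1 : bd B C = 0 := by
      by_contra h
      exact hgood (hB.supp _ _ h).2
    rw [h1]
    by_contra h
    have := (gstep_supp hB h).2
    rw [← mem_tb, ← mem_tb, ← mem_tb, htbT, htbA, htbA] at this
    exact hgood this
  obtain ⟨hs, ht⟩ := hgood
  rw [← hB.st _ _ hCB hs ht, gstep, if_pos hAT]
  have ht1 : t1 T = (insert (G1.s) (insert (G1.t) B) : Finset G1.V) := by
    ext b
    rw [mem_t1, htbT]
    simp [htcT]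
  rw [ht1]
  rw [Finset.sum_eq_single (insert (G1.s) C : Finset G1.V)]
  · rw [if_pos, Finset.prod_eq_one]
    · ring
    · intro e _
      exact fac_empty hD _ (htcT e) (htcA e)
    · ext b
      rw [Finset.mem_inter, htbT, htbA]
      have := @hCB b
      refine ⟨fun ⟨h1, h2⟩ => ?_, fun h => ⟨Finset.mem_insert_of_mem h, this h⟩⟩
      rcases Finset.mem_insert.1 h1 with h | h
      · subst h; exact hs h2
      · exact h
  · intro β hβ hne
    by_cases h1 : bd (insert (G1.s) (insert (G1.t) B)) β = 0
    · rw [h1]; ring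
    obtain ⟨h2, hsβ, htβ⟩ := hB.supp _ _ h1
    have hs' := hsβ (Finset.mem_insert_self _ _)
    rw [if_neg]
    · ring
    intro h
    apply hne
    ext b
    have hb := Finset.ext_iff.1 h b
    rw [Finset.mem_inter, htbT, htbA] at hb
    rw [Finset.mem_insert]
    refine ⟨fun hbβ => ?_, ?_⟩
    · rcases Finset.mem_insert.1 (h2 hbβ) with h | h
      · exact Or.inl h
      · rcases Finset.mem_insert.1 h with h | h
        · subst h; exact (htβ hbβ).elim
        · exact Or.inr (hb.1 ⟨hbβ, h⟩)
    · rintro (rfl | h)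
      · exact hs'
      · exact (hb.2 h).1
  · intro h
    exfalso
    apply h
    rw [Finset.mem_powerset]
    intro b hb
    rcases Finset.mem_insert.1 hb with h | h
    · exact Finset.mem_insert.2 (Or.inl h)
    · exact Finset.mem_insert_of_mem (Finset.mem_insert_of_mem (hCB h))

lemma good_step (hB : Good G1 bd) {D : Finset Gp.V → Finset Gp.V → ℝ} (hD : Good Gp D) :
    Good (glue G1 Gp) (gstep bd D) where
  ne := fun h => hB.ne (Sum.inl.inj h)
  supp := fun T A h => gstep_supp hB h
  st := fun T A h1 h2 h3 => by
    refine gstep_st hB h1 h2 h3 (fun x => ?_) (fun x => ?_)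
    · exact (Finset.mem_insert).trans (or_congr Iff.rfl Finset.mem_insert)
    · exact Finset.mem_insert
  one := by
    rw [← hB.one]
    refine gstep_top hB hD (fun x => ?_) (fun x => ?_) ?_
    · refine (Finset.mem_insert).trans ((or_congr Iff.rfl Finset.mem_insert).trans ?_)
      constructor
      · rintro (h | h | h)
        · exact ⟨_, Finset.mem_insert_self _ _, h⟩
        · exact ⟨_, Finset.mem_insert_of_mem (Finset.mem_insert_self _ _), h⟩
        · exact absurd h (Finset.notMem_empty _)
      · rintro ⟨b, hb, rfl⟩
        rcases Finset.mem_insert.1 hb with h | h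
        · subst h; exact Or.inl rfl
        · rcases Finset.mem_insert.1 h with h | h
          · subst h; exact Or.inr (Or.inl rfl)
          · exact absurd h (Finset.notMem_empty _)
    · refine (Finset.mem_insert).trans ?_
      constructor
      · rintro (h | h)
        · exact ⟨_, Finset.mem_insert_self _ _, h⟩
        · exact absurd h (Finset.notMem_empty _)
      · rintro ⟨b, hb, rfl⟩
        rcases Finset.mem_insert.1 hb with h | h
        · subst h; exact Or.inl rfl
        · exact absurd h (Finset.notMem_empty _)
    · exact Finset.insert_subset_insert _ (Finset.empty_subset _)

lemma base_sum (hB : BGood G1 bd) {i : G1.V} (his : i ≠ G1.s) (hit : i ≠ G1.t)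
    {T1 : Finset G1.V} (hT1 : ∀ b, b ∈ T1 ↔ b = G1.s ∨ b = G1.t ∨ b = i)
    (g : Finset G1.V → ℝ) :
    ∑ β ∈ T1.powerset, bd T1 β * g β = 1 / 2 * (g {G1.s} + g {G1.s, i}) := by
  have hst := hB.ne
  have hne : ({G1.s} : Finset G1.V) ≠ {G1.s, i} := by
    intro h
    have := Finset.ext_iff.1 h i
    simp [his] at this
  have hsub : ({{G1.s}, {G1.s, i}} : Finset (Finset G1.V)) ⊆ T1.powerset := by
    intro β hβ
    rw [Finset.mem_powerset]
    intro b hb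
    rw [hT1]
    simp only [Finset.mem_insert, Finset.mem_singleton] at hβ
    rcases hβ with rfl | rfl
    · simp at hb; tauto
    · simp at hb; tauto
  have hT1' : T1 = insert G1.s (insert G1.t {i}) := by
    ext b; simp [hT1]
  have e1 : bd T1 {G1.s} = 1 / 2 := by
    rw [← (hB.half i his hit).1, ← hB.st {i} ∅ (by simp) (by simp [his.symm]) (by simp), hT1']
    rfl
  have e2 : bd T1 {G1.s, i} = 1 / 2 := by
    rw [← (hB.half i his hit).2, ← hB.st {i} {i} (by simp) (by simp) (by simp [hit.symm]), hT1']
  rw [← Finset.sum_subset hsub, Finset.sum_pair hne, e1, e2]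
  · ring
  · intro β _ hβ
    by_cases h1 : bd T1 β = 0
    · rw [h1]; ring
    exfalso
    obtain ⟨h2, hs, ht⟩ := hB.supp _ _ h1
    have hs' := hs ((hT1 _).2 (Or.inl rfl))
    apply hβ
    rw [Finset.mem_insert, Finset.mem_singleton]
    by_cases hi : i ∈ β
    · right
      ext b
      rw [Finset.mem_insert, Finset.mem_singleton]
      refine ⟨fun hb => ?_, ?_⟩
      · rcases (hT1 b).1 (h2 hb) with h | h | h
        · exact Or.inl h
        · subst h; exact (ht hb).elim
        · exact Or.inr h
      · rintro (rfl | rfl) <;> assumption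
    · left
      ext b
      rw [Finset.mem_singleton]
      refine ⟨fun hb => ?_, ?_⟩
      · rcases (hT1 b).1 (h2 hb) with h | h | h
        · exact h
        · subst h; exact (ht hb).elim
        · subst h; exact (hi hb).elim
      · rintro rfl; assumption

lemma embed_eq_inl (hne : Gp.s ≠ Gp.t) {e : {e // e ∈ G1.E}} {v : Gp.V} {b : G1.V} :
    embed G1 Gp e v = Sum.inl b ↔ (v = Gp.s ∧ b = e.1.1) ∨ (v = Gp.t ∧ b = e.1.2) := by
  unfold embed
  split_ifs with h1 h2
  · subst h1; simp [hne, eq_comm]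
  · subst h2; simp [Ne.symm hne, eq_comm]
  · simp [h1, h2]

lemma embed_eq_inr {e e' : {e // e ∈ G1.E}} {v : Gp.V}
    {w : {v : Gp.V // v ≠ Gp.s ∧ v ≠ Gp.t}} :
    embed G1 Gp e v = Sum.inr (e', w) ↔ e = e' ∧ v = w.1 := by
  unfold embed
  obtain ⟨w, hw1, hw2⟩ := w
  split_ifs with h1 h2
  · subst h1; simp [Ne.symm hw1]
  · subst h2; simp [Ne.symm hw2]
  · simp

set_option maxHeartbeats 2000000 in
lemma gstep_copy (hB : BGood G1 bd)
    {D : Finset Gp.V → Finset Gp.V → ℝ} (hD : Good Gp D)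
    (e : {e // e ∈ G1.E})
    {T A : Finset (glueV G1 Gp)} {B C : Finset Gp.V}
    (hT : ∀ x, x ∈ T ↔ ∃ b ∈ B, embed _ Gp e b = x)
    (hA : ∀ x, x ∈ A ↔ ∃ b ∈ C, embed _ Gp e b = x)
    (hCB : C ⊆ B) (hC0 : C.Nonempty) (hCne : C ≠ B) :
    gstep bd D T A = 1 / 2 * D B C := by
  have hne := hD.ne
  have hAT : A ⊆ T := by
    intro x hx
    obtain ⟨b, hb, rfl⟩ := (hA _).1 hx
    exact (hT _).2 ⟨b, hCB hb, rfl⟩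
  have htc0 : ∀ (T : Finset (glueV G1 Gp)) (B : Finset Gp.V),
      (∀ x, x ∈ T ↔ ∃ b ∈ B, embed _ Gp e b = x) → ∀ e', e' ≠ e → tc T e' = ∅ := by
    intro T B hT e' he'
    ext v
    simp [mem_tc, hT, embed_eq_inr, Ne.symm he']
  have htc1 : ∀ (T : Finset (glueV G1 Gp)) (B : Finset Gp.V),
      (∀ x, x ∈ T ↔ ∃ b ∈ B, embed _ Gp e b = x) → 
      ∀ v, v ∈ tc T e ↔ v ∈ B ∧ v ≠ Gp.s ∧ v ≠ Gp.t := by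
    intro T B hT v
    simp [mem_tc, hT, embed_eq_inr]
    tauto
  have htb : ∀ (T : Finset (glueV G1 Gp)) (B : Finset Gp.V),
      (∀ x, x ∈ T ↔ ∃ b ∈ B, embed _ Gp e b = x) → 
      ∀ b, b ∈ tb T ↔ (Gp.s ∈ B ∧ b = e.1.1) ∨ (Gp.t ∈ B ∧ b = e.1.2) := by
    intro T B hT v
    rw [mem_tb, hT]
    simp only [embed_eq_inl hne]
    constructor
    · rintro ⟨b, hb, (⟨rfl, h⟩ | ⟨rfl, h⟩)⟩ <;> tauto
    · rintro (⟨h, h'⟩ | ⟨h, h'⟩)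
      · exact ⟨_, h, Or.inl ⟨rfl, h'⟩⟩
      · exact ⟨_, h, Or.inr ⟨rfl, h'⟩⟩
  have hprod : ∀ β, ∏ e' ∈ G1.E.attach, fac D T A β e' = fac D T A β e := by
    intro β
    refine Finset.prod_eq_single e (fun e' _ he' => ?_) (fun h => (h (Finset.mem_attach _ _)).elim)
    exact fac_empty hD β (htc0 T B hT e' he') (htc0 A C hA e' he')
  have hTc := htc1 T B hT
  have hAc := htc1 A C hA
  have hTb := htb T B hT
  have hAb := htb A C hA
  have hTc0 := htc0 T B hT
  -- the extension contains the endpoints of the copy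
  have ht1 : ∀ b, b ∈ t1 T ↔ b = G1.s ∨ b = G1.t ∨ b = e.1.1 ∨ b = e.1.2 := by
    intro b
    rw [mem_t1]
    refine or_congr Iff.rfl (or_congr Iff.rfl ?_)
    rw [hTb]
    constructor
    · rintro ((h | h) | ⟨e', he', h⟩)
      · tauto
      · tauto
      · have : e' = e := by
          by_contra h0
          rw [hTc0 e' h0] at he'
          simp at he'
        subst this; exact h
    · intro h
      by_cases hn : (tc T e).Nonempty
      · exact Or.inr ⟨e, hn, h⟩
      left
      have hall : ∀ v ∈ B, v = Gp.s ∨ v = Gp.t := by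
        intro v hv
        by_contra h0
        exact hn ⟨v, (hTc v).2 ⟨hv, by tauto⟩⟩
      obtain ⟨a, ha⟩ := hC0
      obtain ⟨d, hd, hdC⟩ := Finset.exists_of_ssubset (Finset.ssubset_iff_subset_ne.2 ⟨hCB, hCne⟩)
      have had : a ≠ d := fun h => hdC (h ▸ ha)
      rcases hall a (hCB ha) with h1 | h1 <;> rcases hall d hd with h2 | h2
      · exact absurd (h1.trans h2.symm) had
      · have := hCB ha
        subst h1; subst h2; tauto
      · have := hCB ha
        subst h1; subst h2; tauto
      · exact absurd (h1.trans h2.symm) had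
  -- value of the recursive call
  have hrec : ((Gp.s ∈ B → Gp.s ∈ C) ∧ Gp.t ∉ C) →
      D (insert Gp.s (insert Gp.t (tc T e))) (insert Gp.s (tc A e)) = D B C := by
    rintro ⟨h1, h2⟩
    rw [← hD.st B C hCB h1 h2]
    congr 1
    · ext v
      simp only [Finset.mem_insert, hTc]
      tauto
    · ext v
      simp only [Finset.mem_insert, hAc]
      have : v = Gp.t → v ∉ C := by rintro rfl; exact h2
      tauto
  have hrec0 : ¬ ((Gp.s ∈ B → Gp.s ∈ C) ∧ Gp.t ∉ C) → D B C = 0 := by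
    intro h
    by_contra h0
    exact h (hD.supp _ _ h0).2
  have hCB' : tc A e = tc T e → (Gp.s ∈ B → Gp.s ∈ C) → (Gp.t ∈ B → Gp.t ∈ C) → False := by
    intro h1 h2 h3
    apply hCne
    refine Finset.Subset.antisymm hCB fun v hv => ?_
    by_cases hvs : v = Gp.s
    · subst hvs; exact h2 hv
    by_cases hvt : v = Gp.t
    · subst hvt; exact h3 hv
    have := (hTc v).2 ⟨hv, hvs, hvt⟩
    rw [← h1, hAc] at this
    exact this.1
  have hC0' : tc A e = ∅ → Gp.s ∉ C → Gp.t ∉ C → False := by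
    intro h1 h2 h3
    obtain ⟨v, hv⟩ := hC0
    have := (hAc v).2 ⟨hv, fun h => h2 (h ▸ hv), fun h => h3 (h ▸ hv)⟩
    rw [h1] at this
    simp at this
  have hsC := @hCB Gp.s
  have htC := @hCB Gp.t
  rw [gstep, if_pos hAT]
  simp only [hprod, mul_assoc]
  have hfe : ∀ β, fac D T A β e = (if e.1.1 ∈ β ∧ e.1.2 ∈ β then (if tc A e = tc T e then (1 : ℝ) else 0)
         else if e.1.1 ∉ β ∧ e.1.2 ∉ β then (if tc A e = ∅ then (1 : ℝ) else 0)
         else if e.1.1 ∈ β then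
           D (insert Gp.s (insert Gp.t (tc T e))) (insert Gp.s (tc A e))
         else
           D (insert Gp.s (insert Gp.t (tc T e))) (insert Gp.s (tc T e \ tc A e))) := fun _ => rfl
  obtain ⟨i, his, hit, ⟨he1, he2⟩ | ⟨he1, he2⟩⟩ := hB.edge e.1 e.2
  · rw [base_sum hB his hit (fun b => by rw [ht1, he1, he2]; grind only)]
    congr 1
    have hA1 : (({G1.s} : Finset G1.V) ∩ tb T = tb A) ↔ ((Gp.s ∈ B → Gp.s ∈ C) ∧ Gp.t ∉ C) := by
      simp only [Finset.ext_iff, Finset.mem_inter, Finset.mem_singleton, hTb, hAb, he1, he2]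
      constructor
      · intro h
        have h1 := h G1.s
        have h2 := h i
        grind
      · grind
    have hA2 : (({G1.s, i} : Finset G1.V) ∩ tb T = tb A) →
        ((Gp.s ∈ B → Gp.s ∈ C) ∧ (Gp.t ∈ B → Gp.t ∈ C)) := by
      simp only [Finset.ext_iff, Finset.mem_inter, Finset.mem_insert, Finset.mem_singleton,
        hTb, hAb, he1, he2]
      intro h
      have h1 := h G1.s
      have h2 := h i
      grind
    have hz : (if ({G1.s, i} : Finset G1.V) ∩ tb T = tb A then (1 : ℝ) else 0) *
        fac D T A {G1.s, i} e = 0 := by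
      split_ifs with h
      · rw [hfe, if_pos (by simp [he1, he2]), if_neg (fun h' => hCB' h' (hA2 h).1 (hA2 h).2)]
        ring
      · ring
    have hv : fac D T A {G1.s} e =
        D (insert Gp.s (insert Gp.t (tc T e))) (insert Gp.s (tc A e)) := by
      rw [hfe, if_neg (by simp [he2, his]), if_neg (by simp [he1]), if_pos (by simp [he1])]
    rw [hz, add_zero, hv]
    by_cases h : (Gp.s ∈ B → Gp.s ∈ C) ∧ Gp.t ∉ C
    · rw [if_pos (hA1.2 h), hrec h, one_mul]
    · rw [if_neg (fun h' => h (hA1.1 h')), hrec0 h, zero_mul]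
  · rw [base_sum hB his hit (fun b => by rw [ht1, he1, he2]; grind only)]
    congr 1
    have hst := hB.ne
    have hA1 : (({G1.s, i} : Finset G1.V) ∩ tb T = tb A) ↔ ((Gp.s ∈ B → Gp.s ∈ C) ∧ Gp.t ∉ C) := by
      simp only [Finset.ext_iff, Finset.mem_inter, Finset.mem_insert, Finset.mem_singleton,
        hTb, hAb, he1, he2]
      constructor
      · intro h
        have h1 := h G1.t
        have h2 := h i
        grind
      · grind
    have hA2 : (({G1.s} : Finset G1.V) ∩ tb T = tb A) → (Gp.s ∉ C ∧ Gp.t ∉ C) := by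
      simp only [Finset.ext_iff, Finset.mem_inter, Finset.mem_singleton,
        hTb, hAb, he1, he2]
      intro h
      have h1 := h G1.t
      have h2 := h i
      grind
    have hz : (if ({G1.s} : Finset G1.V) ∩ tb T = tb A then (1 : ℝ) else 0) *
        fac D T A {G1.s} e = 0 := by
      split_ifs with h
      · rw [hfe, if_neg (by simp [he1, his]), if_pos (by simp [he1, he2, his, hst.symm]),
          if_neg (fun h' => hC0' h' (hA2 h).1 (hA2 h).2)]
        ring
      · ring
    have hv : fac D T A {G1.s, i} e =
        D (insert Gp.s (insert Gp.t (tc T e))) (insert Gp.s (tc A e)) := by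
      rw [hfe, if_neg (by simp [he2, hst.symm, hit.symm]), if_neg (by simp [he1]),
        if_pos (by simp [he1])]
    rw [hz, zero_add, hv]
    by_cases h : (Gp.s ∈ B → Gp.s ∈ C) ∧ Gp.t ∉ C
    · rw [if_pos (hA1.2 h), hrec h, one_mul]
    · rw [if_neg (fun h' => h (hA1.1 h')), hrec0 h, zero_mul]


lemma embed_inj (hB : BGood G1 bd) (hne : Gp.s ≠ Gp.t) (e : {e // e ∈ G1.E}) {u v : Gp.V}
    (h : embed G1 Gp e u = embed G1 Gp e v) : u = v := by
  have he : e.1.1 ≠ e.1.2 := by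
    obtain ⟨i, his, hit, ⟨h1, h2⟩ | ⟨h1, h2⟩⟩ := hB.edge e.1 e.2
    · rw [h1, h2]; exact his.symm
    · rw [h1, h2]; exact hit
  rcases hv : embed G1 Gp e v with b | ⟨e', w⟩
  · rw [hv] at h
    rw [embed_eq_inl hne] at h hv
    rcases h with ⟨h1, h2⟩ | ⟨h1, h2⟩ <;> rcases hv with ⟨h3, h4⟩ | ⟨h3, h4⟩
    · rw [h1, h3]
    · exact absurd (h2.symm.trans h4) he
    · exact absurd (h4.symm.trans h2) he
    · rw [h1, h3]
  · rw [hv] at h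
    rw [embed_eq_inr] at h hv
    rw [h.2, hv.2]

/-- probability that `u,v` are separated -/
noncomputable def yy (G : SCI) (D : Finset G.V → Finset G.V → ℝ) (p : G.V × G.V) : ℝ :=
  D {p.1, p.2} {p.1} + D {p.1, p.2} {p.2}

lemma yy_copy (hB : BGood G1 bd) {D : Finset Gp.V → Finset Gp.V → ℝ} (hD : Good Gp D)
    (e : {e // e ∈ G1.E}) {u v : Gp.V} (huv : u ≠ v) :
    yy (glue G1 Gp) (gstep bd D) (embed G1 Gp e u, embed G1 Gp e v) = 1 / 2 * yy Gp D (u, v) := by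
  unfold yy
  rw [mul_add]
  congr 1
  · refine gstep_copy hB hD e (fun x => ?_) (fun x => ?_) ?_ ?_ ?_
    · refine (Finset.mem_insert.trans (or_congr Iff.rfl Finset.mem_singleton)).trans ?_
      simp [eq_comm]
    · refine Finset.mem_singleton.trans ?_
      simp [eq_comm]
    · simp
    · simp
    · intro h
      have := Finset.ext_iff.1 h v
      simp [huv.symm] at this
  · refine gstep_copy hB hD e (fun x => ?_) (fun x => ?_) ?_ ?_ ?_
    · refine (Finset.mem_insert.trans (or_congr Iff.rfl Finset.mem_singleton)).trans ?_
      simp [eq_comm]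
    · refine Finset.mem_singleton.trans ?_
      simp [eq_comm]
    · simp
    · simp
    · intro h
      have := Finset.ext_iff.1 h u
      simp [huv] at this

lemma yy_top (hB : BGood G1 bd) {D : Finset Gp.V → Finset Gp.V → ℝ} (hD : Good Gp D)
    (u v : G1.V) :
    yy (glue G1 Gp) (gstep bd D) ((Sum.inl u : glueV G1 Gp), (Sum.inl v : glueV G1 Gp))
      = yy G1 bd (u, v) := by
  unfold yy
  congr 1
  · refine gstep_top hB.toGood hD (fun x => ?_) (fun x => ?_) ?_
    · refine (Finset.mem_insert.trans (or_congr Iff.rfl Finset.mem_singleton)).trans ?_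
      simp
    · refine Finset.mem_singleton.trans ?_
      simp
    · simp
  · refine gstep_top hB.toGood hD (fun x => ?_) (fun x => ?_) ?_
    · refine (Finset.mem_insert.trans (or_congr Iff.rfl Finset.mem_singleton)).trans ?_
      simp
    · refine Finset.mem_singleton.trans ?_
      simp
    · simp

lemma sum_push {ι α : Type*} (S : Finset ι) (E : Finset α) (φ : ι → α) (hφ : ∀ i ∈ S, φ i ∈ E)
    (w : ι → ℝ) (g : α → ℝ) :
    ∑ p ∈ E, (∑ i ∈ S, if φ i = p then w i else 0) * g p = ∑ i ∈ S, w i * g (φ i) := by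
  simp only [Finset.sum_mul]
  rw [Finset.sum_comm]
  refine Finset.sum_congr rfl fun i hi => ?_
  rw [Finset.sum_eq_single (φ i)]
  · simp
  · intro b _ hb
    rw [if_neg (Ne.symm hb), zero_mul]
  · intro h; exact absurd (hφ i hi) h

lemma sum_push2 {ι κ α : Type*} (S : Finset ι) (K : Finset κ) (E : Finset α) (φ : ι → κ → α)
    (hφ : ∀ i ∈ S, ∀ k ∈ K, φ i k ∈ E) (w : ι → κ → ℝ) (g : α → ℝ) :
    ∑ p ∈ E, (∑ i ∈ S, ∑ k ∈ K, if φ i k = p then w i k else 0) * g p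
      = ∑ i ∈ S, ∑ k ∈ K, w i k * g (φ i k) := by
  have := sum_push (S ×ˢ K) E (fun x => φ x.1 x.2)
    (fun x hx => hφ _ (Finset.mem_product.1 hx).1 _ (Finset.mem_product.1 hx).2)
    (fun x => w x.1 x.2) g
  simpa only [Finset.sum_product] using this

lemma mem_glue_E {p : glueV G1 Gp × glueV G1 Gp} : p ∈ (glue G1 Gp).E ↔
    ∃ e : {e // e ∈ G1.E}, ∃ f ∈ Gp.E, (embed G1 Gp e f.1, embed G1 Gp e f.2) = p := by
  refine Finset.mem_biUnion.trans ?_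
  simp only [Finset.mem_image, Finset.mem_attach, true_and]

lemma mem_glue_Dm {p : glueV G1 Gp × glueV G1 Gp} : p ∈ (glue G1 Gp).Dm ↔
    (∃ q ∈ G1.Dm, ((Sum.inl q.1 : glueV G1 Gp), (Sum.inl q.2 : glueV G1 Gp)) = p) ∨
    ∃ e : {e // e ∈ G1.E}, ∃ f ∈ Gp.Dm, (embed G1 Gp e f.1, embed G1 Gp e f.2) = p := by
  refine Finset.mem_union.trans (or_congr Finset.mem_image ?_)
  refine Finset.mem_biUnion.trans ?_
  simp only [Finset.mem_image, Finset.mem_attach, true_and]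

lemma glue_cap_sum (g : glueV G1 Gp × glueV G1 Gp → ℝ) :
    ∑ p ∈ (glue G1 Gp).E, (glue G1 Gp).cap p * g p
      = ∑ e ∈ G1.E.attach, ∑ f ∈ Gp.E, G1.cap e.1 * Gp.cap f *
          g (embed G1 Gp e f.1, embed G1 Gp e f.2) := by
  refine Eq.trans ?_ (sum_push2 G1.E.attach Gp.E (glue G1 Gp).E
    (fun e f => (embed G1 Gp e f.1, embed G1 Gp e f.2))
    (fun e _ f hf => mem_glue_E.2 ⟨e, f, hf, rfl⟩) (fun e f => G1.cap e.1 * Gp.cap f) g)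
  refine Finset.sum_congr rfl fun p _ => congrArg (· * g p) ?_
  refine Finset.sum_congr rfl fun e _ => Finset.sum_congr rfl fun f _ => ?_
  by_cases h : (embed G1 Gp e f.1, embed G1 Gp e f.2) = p
  · exact (if_pos h).trans (if_pos h).symm
  · exact (if_neg h).trans (if_neg h).symm

lemma glue_dem_sum (g : glueV G1 Gp × glueV G1 Gp → ℝ) :
    ∑ p ∈ (glue G1 Gp).Dm, (glue G1 Gp).dem p * g p
      = ∑ q ∈ G1.Dm, G1.dem q * g (Sum.inl q.1, Sum.inl q.2) +
        ∑ e ∈ G1.E.attach, ∑ f ∈ Gp.Dm, G1.cap e.1 * Gp.dem f *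
          g (embed G1 Gp e f.1, embed G1 Gp e f.2) := by
  have k1 := sum_push2 G1.E.attach Gp.Dm (glue G1 Gp).Dm
    (fun e f => (embed G1 Gp e f.1, embed G1 Gp e f.2))
    (fun e _ f hf => mem_glue_Dm.2 (Or.inr ⟨e, f, hf, rfl⟩)) (fun e f => G1.cap e.1 * Gp.dem f) g
  have k2 := sum_push G1.Dm (glue G1 Gp).Dm
      (fun q => ((Sum.inl q.1 : glueV G1 Gp), (Sum.inl q.2 : glueV G1 Gp)))
    (fun q hq => mem_glue_Dm.2 (Or.inl ⟨q, hq, rfl⟩)) (fun q => G1.dem q) g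
  refine Eq.trans ?_ (congrArg₂ (· + ·) k2 k1)
  refine Eq.trans ?_ Finset.sum_add_distrib
  refine Finset.sum_congr rfl fun p _ => Eq.trans (congrArg (· * g p) ?_) (add_mul _ _ _)
  refine congrArg₂ (· + ·) ?_ ?_
  · refine Finset.sum_congr rfl fun q _ => ?_
    by_cases h : ((Sum.inl q.1 : glueV G1 Gp), (Sum.inl q.2 : glueV G1 Gp)) = p
    · exact (if_pos h).trans (if_pos h).symm
    · exact (if_neg h).trans (if_neg h).symm
  · refine Finset.sum_congr rfl fun e _ => Finset.sum_congr rfl fun f _ => ?_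
    by_cases h : (embed G1 Gp e f.1, embed G1 Gp e f.2) = p
    · exact (if_pos h).trans (if_pos h).symm
    · exact (if_neg h).trans (if_neg h).symm

/-- The quantitative claim for an instance with local distributions, at level `l`. -/
structure Claim (G : SCI) (D : Finset G.V → Finset G.V → ℝ) (c : ℝ) (l : ℕ) : Prop where
  neE : ∀ e ∈ G.E, e.1 ≠ e.2
  neD : ∀ e ∈ G.Dm, e.1 ≠ e.2
  y : ∀ e ∈ G.E, yy G D e = ((2 : ℝ) ^ l)⁻¹
  cap : ∑ e ∈ G.E, G.cap e = 2 ^ l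
  dem : ∑ p ∈ G.Dm, G.dem p * yy G D p = l * c

lemma claim_step (hB : BGood G1 bd) {c : ℝ} (h1 : Claim G1 bd c 1)
    {D : Finset Gp.V → Finset Gp.V → ℝ} (hD : Good Gp D) {l : ℕ} (h : Claim Gp D c l) :
    Claim (glue G1 Gp) (gstep bd D) c (l + 1) where
  neE := by
    intro p hp
    obtain ⟨e, f, hf, rfl⟩ := mem_glue_E.1 hp
    exact fun h0 => h.neE f hf (embed_inj hB hD.ne e h0)
  neD := by
    intro p hp
    rcases mem_glue_Dm.1 hp with ⟨q, hq, rfl⟩ | ⟨e, f, hf, rfl⟩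
    · exact fun h0 => h1.neD q hq (Sum.inl.inj h0)
    · exact fun h0 => h.neD f hf (embed_inj hB hD.ne e h0)
  y := by
    intro p hp
    obtain ⟨e, f, hf, rfl⟩ := mem_glue_E.1 hp
    refine (yy_copy hB hD e (h.neE f hf)).trans ?_
    rw [Prod.mk.eta, h.y f hf, pow_succ]
    field_simp
  cap := by
    have := glue_cap_sum (G1 := G1) (Gp := Gp) (fun _ => 1)
    simp only [mul_one] at this
    refine this.trans ?_
    simp only [← Finset.mul_sum, h.cap, ← Finset.sum_mul]
    rw [Finset.sum_attach G1.E G1.cap, h1.cap]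
    ring
  dem := by
    refine (glue_dem_sum (G1 := G1) (Gp := Gp) (yy (glue G1 Gp) (gstep bd D))).trans ?_
    have e1 : ∑ q ∈ G1.Dm, G1.dem q * yy (glue G1 Gp) (gstep bd D)
        ((Sum.inl q.1 : glueV G1 Gp), (Sum.inl q.2 : glueV G1 Gp)) = c := by
      have := h1.dem
      rw [Nat.cast_one, one_mul] at this
      rw [← this]
      exact Finset.sum_congr rfl fun q _ => congrArg (G1.dem q * ·) (yy_top hB hD q.1 q.2)
    have e2 : ∀ e ∈ G1.E.attach, ∑ f ∈ Gp.Dm, G1.cap e.1 * Gp.dem f *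
          yy (glue G1 Gp) (gstep bd D) (embed G1 Gp e f.1, embed G1 Gp e f.2)
          = G1.cap e.1 * (1 / 2 * (l * c)) := by
      intro e _
      rw [← h.dem, Finset.mul_sum, Finset.mul_sum]
      refine Finset.sum_congr rfl fun f hf => ?_
      refine (congrArg (G1.cap e.1 * Gp.dem f * ·) (yy_copy hB hD e (h.neD f hf))).trans ?_
      simp only [Prod.mk.eta]
      ring
    refine (congrArg₂ (· + ·) e1 (Finset.sum_congr rfl e2)).trans ?_
    rw [← Finset.sum_mul, Finset.sum_attach G1.E G1.cap, h1.cap]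
    push_cast
    ring

end helpers

section concrete

variable {n : ℕ} {H : SimpleGraph (Fin n)} [DecidableRel H.Adj]
  {F : Finset (Fin n) → Finset (Fin n) → ℝ}

lemma baseDist_supp {T A : Finset (Fin n ⊕ Bool)} (h : baseDist n F T A ≠ 0) :
    A ⊆ T ∧ (Sum.inr false ∈ T → Sum.inr false ∈ A) ∧ Sum.inr true ∉ A := by
  unfold baseDist at h
  by_contra hc
  exact h (if_neg hc)

lemma baseDist_st {T A : Finset (Fin n ⊕ Bool)} (hAT : A ⊆ T)
    (hs : Sum.inr false ∈ T → Sum.inr false ∈ A) (ht : Sum.inr true ∉ A)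
    {T' A' : Finset (Fin n ⊕ Bool)}
    (hT' : ∀ x, x ∈ T' ↔ x = Sum.inr false ∨ x = Sum.inr true ∨ x ∈ T)
    (hA' : ∀ x, x ∈ A' ↔ x = Sum.inr false ∨ x ∈ A) :
    baseDist n F T' A' = baseDist n F T A := by
  have h1 : A ⊆ T ∧ (Sum.inr false ∈ T → Sum.inr false ∈ A) ∧ Sum.inr true ∉ A := ⟨hAT, hs, ht⟩
  have h2 : A' ⊆ T' ∧ (Sum.inr false ∈ T' → Sum.inr false ∈ A') ∧ Sum.inr true ∉ A' := by
    refine ⟨?_, ?_, ?_⟩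
    · intro x hx
      rw [hT']
      rcases (hA' x).1 hx with h | h
      · exact Or.inl h
      · exact Or.inr (Or.inr (hAT h))
    · simp [hA']
    · simpa [hA'] using ht
  unfold baseDist
  rw [if_pos h1, if_pos h2]
  simp [hT', hA']

lemma good_base (hF : F ∅ ∅ = 1) : Good (buildG1 n H) (baseDist n F) where
  ne := by simp [buildG1]
  supp := fun T A h => baseDist_supp h
  st := fun T A h1 h2 h3 =>
    baseDist_st (F := F) h1 h2 h3
      (fun x => Finset.mem_insert.trans (or_congr Iff.rfl Finset.mem_insert))
      (fun x => Finset.mem_insert)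
  one := by
    have h2 : baseDist n F ∅ ∅ = 1 := by
      simp [baseDist, hF]; norm_num
    rw [← h2]
    exact baseDist_st (F := F) (by simp) (by simp) (by simp)
      (fun x => Finset.mem_insert.trans (or_congr Iff.rfl Finset.mem_insert))
      (fun x => Finset.mem_insert)

lemma mem_E {e : (Fin n ⊕ Bool) × (Fin n ⊕ Bool)} : e ∈ (buildG1 n H).E ↔
    (∃ i : Fin n, ((Sum.inr false : Fin n ⊕ Bool), (Sum.inl i : Fin n ⊕ Bool)) = e) ∨
    (∃ i : Fin n, ((Sum.inl i : Fin n ⊕ Bool), (Sum.inr true : Fin n ⊕ Bool)) = e) := by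
  refine Finset.mem_union.trans (or_congr ?_ ?_)
  · refine Finset.mem_image.trans ?_
    simp
  · refine Finset.mem_image.trans ?_
    simp

lemma base_half {i : Fin n} (hF : F {i} ∅ + F {i} {i} = 1) {T A : Finset (Fin n ⊕ Bool)}
    (hT : ∀ x, x ∈ T ↔ x = Sum.inl i)
    (hA : (∀ x, x ∉ A) ∨ (∀ x, x ∈ A ↔ x = Sum.inl i)) : baseDist n F T A = 1 / 2 := by
  have hfT : (Finset.univ.filter fun j : Fin n => (Sum.inl j : Fin n ⊕ Bool) ∈ T) = {i} := by
    ext j; simp [hT]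
  unfold baseDist
  rw [hfT]
  rcases hA with hA | hA
  · have : (Finset.univ.filter fun j : Fin n => (Sum.inl j : Fin n ⊕ Bool) ∈ A) = ∅ := by
      ext j; simp [hA]
    rw [if_pos, this, Finset.sdiff_empty, hF, mul_one]
    exact ⟨fun x hx => absurd hx (hA x), by simp [hT], hA _⟩
  · have : (Finset.univ.filter fun j : Fin n => (Sum.inl j : Fin n ⊕ Bool) ∈ A) = {i} := by
      ext j; simp [hA]
    rw [if_pos, this, Finset.sdiff_self, add_comm, hF, mul_one]
    exact ⟨fun x hx => (hT x).2 ((hA x).1 hx), by simp [hT], by simp [hA]⟩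

lemma base_pair {i j : Fin n} (hij : i ≠ j) :
    yy (buildG1 n H) (baseDist n F) ((Sum.inl i : Fin n ⊕ Bool), (Sum.inl j : Fin n ⊕ Bool))
      = F {i, j} {i} + F {i, j} {j} := by
  have key : ∀ (T A : Finset (Fin n ⊕ Bool)) (B C : Finset (Fin n)),
      (∀ x, x ∈ T ↔ ∃ b ∈ B, x = Sum.inl b) → (∀ x, x ∈ A ↔ ∃ b ∈ C, x = Sum.inl b) → C ⊆ B →
      baseDist n F T A = 1 / 2 * (F B C + F B (B \ C)) := by
    intro T A B C hT hA hCB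
    have h1 : (Finset.univ.filter fun j : Fin n => (Sum.inl j : Fin n ⊕ Bool) ∈ T) = B := by
      ext j; simp [hT]
    have h2 : (Finset.univ.filter fun j : Fin n => (Sum.inl j : Fin n ⊕ Bool) ∈ A) = C := by
      ext j; simp [hA]
    unfold baseDist
    rw [h1, h2, if_pos]
    refine ⟨fun x hx => ?_, by simp [hT], by simp [hA]⟩
    obtain ⟨b, hb, rfl⟩ := (hA x).1 hx
    exact (hT _).2 ⟨b, hCB hb, rfl⟩
  have s1 : ({i, j} : Finset (Fin n)) \ {i} = {j} := by
    ext x; simp only [Finset.mem_sdiff, Finset.mem_insert, Finset.mem_singleton]; grind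
  have s2 : ({i, j} : Finset (Fin n)) \ {j} = {i} := by
    ext x; simp only [Finset.mem_sdiff, Finset.mem_insert, Finset.mem_singleton]; grind
  have k1 := key {Sum.inl i, Sum.inl j} {Sum.inl i} {i, j} {i} (by simp) (by simp) (by simp)
  have k2 := key {Sum.inl i, Sum.inl j} {Sum.inl j} {i, j} {j} (by simp) (by simp) (by simp)
  rw [s1] at k1
  rw [s2] at k2
  refine (congrArg₂ (· + ·) k1 k2).trans ?_
  ring

lemma bgood_base (hF0 : F ∅ ∅ = 1) (hF : ∀ i, F {i} ∅ + F {i} {i} = 1) :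
    BGood (buildG1 n H) (baseDist n F) where
  toGood := good_base hF0
  edge := by
    intro e he
    rcases mem_E.1 he with ⟨i, rfl⟩ | ⟨i, rfl⟩
    · exact ⟨(Sum.inl i : Fin n ⊕ Bool), Sum.inl_ne_inr, Sum.inl_ne_inr, Or.inl ⟨rfl, rfl⟩⟩
    · exact ⟨(Sum.inl i : Fin n ⊕ Bool), Sum.inl_ne_inr, Sum.inl_ne_inr, Or.inr ⟨rfl, rfl⟩⟩
  half := by
    intro b hs ht
    change Fin n ⊕ Bool at b
    rcases b with i | b
    · exact ⟨base_half (hF i) (fun x => Finset.mem_singleton) (Or.inl fun x => Finset.notMem_empty x),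
        base_half (hF i) (fun x => Finset.mem_singleton) (Or.inr fun x => Finset.mem_singleton)⟩
    · cases b
      · exact absurd rfl hs
      · exact absurd rfl ht

lemma base_cap_sum (g : (Fin n ⊕ Bool) × (Fin n ⊕ Bool) → ℝ) :
    ∑ e ∈ (buildG1 n H).E, g e = ∑ i : Fin n, g (Sum.inr false, Sum.inl i)
      + ∑ i : Fin n, g (Sum.inl i, Sum.inr true) := by
  refine (Finset.sum_union (Finset.disjoint_left.2 ?_)).trans (congrArg₂ (· + ·)
    (Finset.sum_image ?_) (Finset.sum_image ?_))
  · intro x hx hx'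
    obtain ⟨i, -, rfl⟩ := Finset.mem_image.1 hx
    obtain ⟨j, -, h⟩ := Finset.mem_image.1 hx'
    exact Sum.inl_ne_inr (Prod.mk.inj h).1
  · intro i _ j _ h
    exact Sum.inl.inj (Prod.mk.inj h).2
  · intro i _ j _ h
    exact Sum.inl.inj (Prod.mk.inj h).1

lemma claim_base (hm : 0 < H.edgeFinset.card) (hF0 : F ∅ ∅ = 1)
    (hF : ∀ i, F {i} ∅ + F {i} {i} = 1) (c : ℝ)
    (hval : ∑ p ∈ Finset.univ.filter (fun p : Fin n × Fin n => H.Adj p.1 p.2 ∧ p.1 < p.2),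
        (F {p.1, p.2} {p.1} + F {p.1, p.2} {p.2}) = c * H.edgeFinset.card) :
    Claim (buildG1 n H) (baseDist n F) c 1 := by
  have hm' : (H.edgeFinset.card : ℝ) ≠ 0 := by exact_mod_cast hm.ne'
  refine ⟨?_, ?_, ?_, ?_, ?_⟩
  · intro e he
    rcases mem_E.1 he with ⟨i, rfl⟩ | ⟨i, rfl⟩
    · exact Sum.inr_ne_inl
    · exact Sum.inl_ne_inr
  · intro e he
    obtain ⟨p, hp, rfl⟩ := Finset.mem_image.1 he
    have := (Finset.mem_filter.1 hp).2.1.ne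
    exact fun h => this (Sum.inl.inj h)
  · intro e he
    rw [pow_one]
    rcases mem_E.1 he with ⟨i, rfl⟩ | ⟨i, rfl⟩
    · have a1 : baseDist n F {Sum.inr false, Sum.inl i} {Sum.inr false} = 1 / 2 := by
        rw [← base_half (F := F) (T := {Sum.inl i}) (A := ∅) (hF i) (by simp) (by simp)]
        simp [baseDist]
      have a2 : baseDist n F {Sum.inr false, Sum.inl i} {Sum.inl i} = 0 := by
        simp [baseDist]
      refine (congrArg₂ (· + ·) a1 a2).trans ?_
      norm_num
    · have a1 : baseDist n F {Sum.inl i, Sum.inr true} {Sum.inl i} = 1 / 2 := by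
        rw [← base_half (F := F) (T := {Sum.inl i}) (A := {Sum.inl i}) (hF i) (by simp) (by simp)]
        simp [baseDist]
      have a2 : baseDist n F {Sum.inl i, Sum.inr true} {Sum.inr true} = 0 := by
        simp [baseDist]
      refine (congrArg₂ (· + ·) a1 a2).trans ?_
      norm_num
  · refine (base_cap_sum _).trans ?_
    have hdeg : ∑ i : Fin n, (H.degree i : ℝ) = 2 * H.edgeFinset.card := by
      exact_mod_cast H.sum_degrees_eq_twice_card_edges
    change ∑ i : Fin n, (H.degree i : ℝ) / (2 * H.edgeFinset.card) +
      ∑ i : Fin n, (H.degree i : ℝ) / (2 * H.edgeFinset.card) = _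
    rw [← Finset.sum_div, hdeg]
    field_simp
    norm_num
  · refine (Finset.sum_image ?_).trans ?_
    · intro p _ q _ h
      exact Prod.ext (Sum.inl.inj (Prod.mk.inj h).1) (Sum.inl.inj (Prod.mk.inj h).2)
    · have : ∀ p ∈ Finset.univ.filter (fun p : Fin n × Fin n => H.Adj p.1 p.2 ∧ p.1 < p.2),
          (buildG1 n H).dem ((Sum.inl p.1 : Fin n ⊕ Bool), (Sum.inl p.2 : Fin n ⊕ Bool)) *
          yy (buildG1 n H) (baseDist n F) ((Sum.inl p.1 : Fin n ⊕ Bool), (Sum.inl p.2 : Fin n ⊕ Bool))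
          = (1 / (H.edgeFinset.card : ℝ)) * (F {p.1, p.2} {p.1} + F {p.1, p.2} {p.2}) := by
        intro p hp
        have hadj := (Finset.mem_filter.1 hp).2.1
        rw [base_pair hadj.ne]
        congr 1
        exact if_pos hadj
      refine (Finset.sum_congr rfl this).trans ?_
      rw [← Finset.mul_sum, hval]
      field_simp
      simp

lemma main_claim (hm : 0 < H.edgeFinset.card) (hF0 : F ∅ ∅ = 1)
    (hF : ∀ i, F {i} ∅ + F {i} {i} = 1) (c : ℝ)
    (hval : ∑ p ∈ Finset.univ.filter (fun p : Fin n × Fin n => H.Adj p.1 p.2 ∧ p.1 < p.2),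
        (F {p.1, p.2} {p.1} + F {p.1, p.2} {p.2}) = c * H.edgeFinset.card) :
    ∀ k, Good (Gpow (buildG1 n H) k) (Dfam n H F k) ∧
      Claim (Gpow (buildG1 n H) k) (Dfam n H F k) c (k + 1)
  | 0 => ⟨good_base hF0, claim_base hm hF0 hF c hval⟩
  | k + 1 =>
    have ih := main_claim hm hF0 hF c hval k
    ⟨good_step (good_base hF0) ih.1,
      claim_step (bgood_base hF0 hF) (claim_base hm hF0 hF c hval) ih.1 ih.2⟩

end concrete

/-- Let `H` be an unweighted MaxCut instance with `m` edges whose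
`r`-round Sherali-Adams solution (given by consistent local distributions `F`, with
`r ≥ 2`) has value `Σ_{e∈E_H} z_e = c·m`, where
`z_{ij} = F({i,j},{i}) + F({i,j},{j})`, and let `D` be the local distributions on the
powered instance `G_ℓ` constructed from it by the recursive symmetrized sampling
process.  Define `y_{uv} := D_{{u,v}}({{u},{v}})`, the probability that exactly one of
`u, v` is chosen.  Then:
(i) `y_e = 2^{−ℓ}` for every capacity edge `e` of `G_ℓ`, and the total capacity of
`G_ℓ` is `2^ℓ`, so `Σ_e cap_e·y_e = 1`;
(ii) `Σ_e dem_e·y_e = ℓ·c`;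
hence the sparsity of the fractional solution `y` — the ratio of its capacity value to
its demand value — equals `1/(ℓc)`. -/
theorem stmt_19 (n : ℕ) (H : SimpleGraph (Fin n)) [DecidableRel H.Adj]
    (hconn : H.Connected) (hm : 0 < H.edgeFinset.card)
    (r : ℕ) (hr : 2 ≤ r)
    (F : Finset (Fin n) → Finset (Fin n) → ℝ)
    (hF1 : ∀ R : Finset (Fin n), R.card ≤ r → ∀ A ⊆ R, 0 ≤ F R A)
    (hF2 : ∀ R : Finset (Fin n), R.card ≤ r → ∑ A ∈ R.powerset, F R A = 1)
    (hF3 : ∀ R : Finset (Fin n), R.card ≤ r → ∀ Q ⊆ R, ∀ A ⊆ Q,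
        F Q A = ∑ B ∈ R.powerset.filter (fun B => B ∩ Q = A), F R B)
    (c : ℝ)
    (hval : ∑ p ∈ Finset.univ.filter (fun p : Fin n × Fin n => H.Adj p.1 p.2 ∧ p.1 < p.2),
        (F {p.1, p.2} {p.1} + F {p.1, p.2} {p.2}) = c * H.edgeFinset.card)
    (ℓ : ℕ) (hℓ : 1 ≤ ℓ) :
    (∀ e ∈ (Gpow (buildG1 n H) (ℓ - 1)).E,
        Dfam n H F (ℓ - 1) {e.1, e.2} {e.1} + Dfam n H F (ℓ - 1) {e.1, e.2} {e.2}
          = ((2 : ℝ) ^ ℓ)⁻¹) ∧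
    (∑ e ∈ (Gpow (buildG1 n H) (ℓ - 1)).E, (Gpow (buildG1 n H) (ℓ - 1)).cap e
        = (2 : ℝ) ^ ℓ) ∧
    (∑ e ∈ (Gpow (buildG1 n H) (ℓ - 1)).E, (Gpow (buildG1 n H) (ℓ - 1)).cap e *
        (Dfam n H F (ℓ - 1) {e.1, e.2} {e.1} + Dfam n H F (ℓ - 1) {e.1, e.2} {e.2})
        = 1) ∧
    (∑ p ∈ (Gpow (buildG1 n H) (ℓ - 1)).Dm, (Gpow (buildG1 n H) (ℓ - 1)).dem p *
        (Dfam n H F (ℓ - 1) {p.1, p.2} {p.1} + Dfam n H F (ℓ - 1) {p.1, p.2} {p.2})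
        = (ℓ : ℝ) * c) ∧
    ((∑ e ∈ (Gpow (buildG1 n H) (ℓ - 1)).E, (Gpow (buildG1 n H) (ℓ - 1)).cap e *
        (Dfam n H F (ℓ - 1) {e.1, e.2} {e.1} + Dfam n H F (ℓ - 1) {e.1, e.2} {e.2})) /
     (∑ p ∈ (Gpow (buildG1 n H) (ℓ - 1)).Dm, (Gpow (buildG1 n H) (ℓ - 1)).dem p *
        (Dfam n H F (ℓ - 1) {p.1, p.2} {p.1} + Dfam n H F (ℓ - 1) {p.1, p.2} {p.2}))
        = 1 / ((ℓ : ℝ) * c)) := by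
  have hF0 : F ∅ ∅ = 1 := by
    have := hF2 ∅ (by simp)
    simpa using this
  have hF : ∀ i, F {i} ∅ + F {i} {i} = 1 := by
    intro i
    have := hF2 {i} (by simp; omega)
    rw [← insert_empty_eq, Finset.sum_powerset_insert (Finset.notMem_empty i)] at this
    simpa using this
  obtain ⟨k, rfl⟩ : ∃ k, ℓ = k + 1 := ⟨ℓ - 1, by omega⟩
  obtain ⟨-, h⟩ := main_claim hm hF0 hF c hval k
  rw [Nat.add_sub_cancel]
  have hy := h.y
  have hd := h.dem
  simp only [yy] at hy hd
  have hcap : ∑ e ∈ (Gpow (buildG1 n H) k).E, (Gpow (buildG1 n H) k).cap e *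
      (Dfam n H F k {e.1, e.2} {e.1} + Dfam n H F k {e.1, e.2} {e.2}) = 1 := by
    rw [Finset.sum_congr rfl (fun e he => by rw [hy e he]), ← Finset.sum_mul, h.cap]
    exact mul_inv_cancel₀ (by positivity)
  refine ⟨hy, h.cap, hcap, hd, ?_⟩
  rw [hcap, hd]

end Stmt19
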